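/- Let D ⊂ ℂ be a bounded simply connected domain with C^2 boundary and g : S^1 → ℂ^m a C^2 embedded curve such that the projection to the last coordinate ζ_m ∘ g : S^1 → ℂ parametrizes ∂D as an embedding. If ∫_{g(S^1)} φ = 0 for every holomorphic 1-form φ = Σ_a f_a(z) dz^a on ℂ^m (f_a entire), then there exists a holomorphic map G : D̄ → ℂ^m with G(∂D) = g(S^1). -/

import Mathlib

open Real

/-- A set `D ⊂ ℂ` has `C^2` boundary. -/
def HasC2Boundary (D : Set ℂ) : Prop :=
  ∀ x ∈ frontier D, ∃ (U : Set ℂ) (f : ℂ → ℝ),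
    IsOpen U ∧ x ∈ U ∧ ContDiff ℝ 2 f ∧ (∀ y ∈ U, fderiv ℝ f y ≠ 0) ∧
    D ∩ U = {y ∈ U | f y < 0}

/-!
Write `γ` for the last coordinate of `g` and let `h` be any coordinate of `g`. The moments
`∫ γ ^ n * h dγ` vanish, so the Cauchy integral of `h` along `γ` vanishes near infinity, hence on
the whole component of the complement of `γ` that contains infinity. By compactness `γ` has a
nondegenerate collar, and in normal coordinates `(t, ε)` on it the difference of the Cauchy
integral at `(t, ε)` and `(t, -ε)` is, after rescaling the curve parameter by `ε`, an integral
dominated by a multiple of `1 / (1 + v ^ 2)`; it tends to `h t`, even for merely continuous `h`.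
Points of `D` near `γ` and their mirror points lie on opposite sides of `γ`, so the Cauchy
integral restricted to `D` extends continuously to the closure, with boundary values `± h`.
-/

section

open Complex Filter Function MeasureTheory Metric Set Topology

/-! ### Periodic functions, components and integrals of Cauchy type -/

theorem injOn_Ico_of_periodic {α β : Type*} [AddCommGroup α] [LinearOrder α] [IsOrderedAddMonoid α]
    [Archimedean α] {f : α → β} {T : α} (hf : Periodic f T) (hT : 0 < T) {a : α}
    (h : InjOn f (Ico a (a + T))) (b : α) : InjOn f (Ico b (b + T)) := by
  intro x hx y hy hxy
  have hmod : ∀ z, f (toIcoMod hT a z) = f z := fun z => hf.sub_zsmul_eq _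
  have key : toIcoMod hT a x = toIcoMod hT a y :=
    h (toIcoMod_mem_Ico hT a x) (toIcoMod_mem_Ico hT a y) (by rw [hmod, hmod, hxy])
  rw [← (toIcoMod_eq_self hT).2 hx, ← (toIcoMod_eq_self hT).2 hy]
  exact (toIcoMod_inj hT).2 ((toIcoMod_inj hT).1 key)

theorem periodic_deriv {E : Type*} [NormedAddCommGroup E] [NormedSpace ℝ E] {f : ℝ → E} {T : ℝ}
    (hf : Periodic f T) : Periodic (deriv f) T := fun t => by
  rw [← deriv_comp_add_const, funext hf]

theorem exists_forall_norm_sub_le_of_periodic {E : Type*} [SeminormedAddCommGroup E] {f : ℝ → E}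
    {T : ℝ} (hf : Periodic f T) (hT : 0 < T) (hcont : Continuous f) (t₀ : ℝ) (z : E) :
    ∃ t, |t - t₀| ≤ T / 2 ∧ ∀ s, ‖z - f t‖ ≤ ‖z - f s‖ := by
  obtain ⟨t, ht, hmin⟩ := (isCompact_closedBall t₀ (T / 2)).exists_isMinOn
    ⟨t₀, mem_closedBall_self (half_pos hT).le⟩
    (by fun_prop : Continuous fun s => ‖z - f s‖).continuousOn
  refine ⟨t, ht, fun s => ?_⟩
  obtain ⟨y, hy, hsy⟩ := hf.exists_mem_Ico hT s (t₀ - T / 2)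
  rw [hsy]
  refine hmin ?_
  rw [Real.closedBall_eq_Icc]
  exact ⟨hy.1, by linarith [hy.2]⟩

theorem dslope_eq_integral {E : Type*} [NormedAddCommGroup E] [NormedSpace ℝ E] [CompleteSpace E]
    {f : ℝ → E} (hf : ContDiff ℝ 1 f) (a b : ℝ) :
    dslope f a b = ∫ s in (0 : ℝ)..1, deriv f (a + s * (b - a)) := by
  rcases eq_or_ne b a with rfl | hab
  · simp
  · have hftc := intervalIntegral.integral_unitInterval_deriv_eq_sub
      (f := f) (f' := deriv f) (z₀ := a) (z₁ := b - a)
      ((hf.continuous_deriv le_rfl).comp (by fun_prop)).continuousOn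
      fun s _ => (hf.differentiable one_ne_zero _).hasDerivAt
    rw [add_sub_cancel, ← sub_smul_dslope] at hftc
    exact (smul_right_injective E (sub_ne_zero.2 hab) hftc).symm

theorem continuous_dslope_uncurry {E : Type*} [NormedAddCommGroup E] [NormedSpace ℝ E]
    [CompleteSpace E] {f : ℝ → E} (hf : ContDiff ℝ 1 f) :
    Continuous fun p : ℝ × ℝ => dslope f p.1 p.2 := by
  have hcont : Continuous (uncurry fun (p : ℝ × ℝ) (s : ℝ) => deriv f (p.1 + s * (p.2 - p.1))) :=
    (hf.continuous_deriv le_rfl).comp (by fun_prop)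
  simp_rw [dslope_eq_integral hf]
  exact intervalIntegral.continuous_parametric_intervalIntegral_of_continuous' hcont 0 1

theorem closure_connectedComponentIn_inter_subset {X : Type*} [TopologicalSpace X] (s : Set X)
    (x : X) : closure (connectedComponentIn s x) ∩ s ⊆ connectedComponentIn s x := by
  rintro y ⟨hy, hys⟩
  have hx : x ∈ s := by
    by_contra hx
    simp [connectedComponentIn_eq_empty hx] at hy
  refine (isPreconnected_connectedComponentIn.subset_closure (subset_insert y _)
    (insert_subset hy subset_closure)).subset_connectedComponentIn
    (mem_insert_of_mem y (mem_connectedComponentIn hx))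
    (insert_subset hys (connectedComponentIn_subset s x)) (mem_insert y _)

theorem subset_of_isPreconnected_of_disjoint_frontier {X : Type*} [TopologicalSpace X]
    {s u : Set X} (hs : IsPreconnected s) (hu : IsOpen u) (hdisj : Disjoint s (frontier u))
    (hne : (s ∩ u).Nonempty) : s ⊆ u := by
  refine hs.subset_of_closure_inter_subset hu hne fun x ⟨hx, hxs⟩ => ?_
  by_contra hxu
  exact hdisj.notMem_of_mem_left hxs (hu.frontier_eq ▸ ⟨hx, hxu⟩)

theorem disjoint_connectedComponentIn_compl_frontier {X : Type*} [TopologicalSpace X] {s : Set X}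
    (hs : IsOpen s) {x : X} (hx : x ∉ s) : Disjoint s (connectedComponentIn (frontier s)ᶜ x) := by
  rw [disjoint_comm, Set.disjoint_iff_inter_eq_empty, ← not_nonempty_iff_eq_empty]
  intro hne
  have hsub := connectedComponentIn_subset (frontier s)ᶜ x
  have hmem : x ∈ connectedComponentIn (frontier s)ᶜ x :=
    mem_connectedComponentIn (connectedComponentIn_nonempty_iff.1 (hne.mono inter_subset_left))
  exact hx (subset_of_isPreconnected_of_disjoint_frontier isPreconnected_connectedComponentIn hs
    (subset_compl_iff_disjoint_right.1 hsub) hne hmem)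

theorem frontier_connectedComponentIn_subset_compl {X : Type*} [TopologicalSpace X]
    [LocallyConnectedSpace X] {s : Set X} (hs : IsOpen s) (x : X) :
    frontier (connectedComponentIn s x) ⊆ sᶜ := by
  intro y hy hys
  rw [hs.connectedComponentIn.frontier_eq] at hy
  exact hy.2 (closure_connectedComponentIn_inter_subset s x ⟨hy.1, hys⟩)

theorem integral_eq_integral_smul_add_mul_of_periodic {E : Type*} [NormedAddCommGroup E]
    [NormedSpace ℝ E] {f : ℝ → E} {T : ℝ} (hf : Periodic f T) (hT : 0 ≤ T) (t : ℝ) {ε : ℝ}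
    (hε : 0 < ε) :
    ∫ s in (0 : ℝ)..T, f s = ∫ v in {v : ℝ | |ε * v| ≤ T / 2}, ε • f (t + ε * v) := by
  have hset : {v : ℝ | |ε * v| ≤ T / 2} = Icc (-(T / 2 / ε)) (T / 2 / ε) := by
    ext v
    rw [mem_ofPred_eq, mem_Icc, ← abs_le, abs_mul, abs_of_pos hε, le_div_iff₀' hε]
  have hmul : ε * (T / 2 / ε) = T / 2 := mul_div_cancel₀ _ hε.ne'
  have hshift := hf.intervalIntegral_add_eq 0 (t - T / 2)
  rw [zero_add, sub_add_eq_add_sub, add_sub_assoc, sub_half] at hshift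
  rw [hset, integral_Icc_eq_integral_Ioc, ← intervalIntegral.integral_of_le
    (neg_le_self (by positivity)), hshift, intervalIntegral.integral_smul,
    intervalIntegral.smul_integral_comp_add_mul, mul_neg, hmul, ← sub_eq_add_neg]

theorem differentiableOn_integral_div_sub {γ k : ℝ → ℂ} {a b : ℝ} (hγ : ContinuousOn γ (uIcc a b))
    (hk : ContinuousOn k (uIcc a b)) :
    DifferentiableOn ℂ (fun z => ∫ t in a..b, k t / (γ t - z)) (γ '' uIcc a b)ᶜ := by
  intro z hz
  have hopen : IsOpen (γ '' uIcc a b)ᶜ :=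
    (isCompact_uIcc.image_of_continuousOn hγ).isClosed.isOpen_compl
  obtain ⟨r, hr, hball⟩ := nhds_basis_closedBall.mem_iff.1 (hopen.mem_nhds hz)
  have hne : ∀ w ∈ closedBall z r, ∀ t ∈ uIcc a b, γ t - w ≠ 0 := fun w hw t ht h0 =>
    hball hw ⟨t, ht, sub_eq_zero.1 h0⟩
  have hcont : ∀ w ∈ closedBall z r, ContinuousOn (fun t => k t / (γ t - w)) (uIcc a b) :=
    fun w hw => hk.div (hγ.sub continuousOn_const) (hne w hw)
  have hcont' : ContinuousOn (fun p : ℂ × ℝ => k p.2 / (γ p.2 - p.1) ^ 2)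
      (closedBall z r ×ˢ uIcc a b) := by
    have hsnd : MapsTo Prod.snd (closedBall z r ×ˢ uIcc a b) (uIcc a b) := fun p hp => hp.2
    exact (hk.comp continuousOn_snd hsnd).div
      (((hγ.comp continuousOn_snd hsnd).sub continuousOn_fst).pow 2)
      fun p hp => pow_ne_zero 2 (hne p.1 hp.1 p.2 hp.2)
  obtain ⟨C, hC⟩ :=
    ((isCompact_closedBall z r).prod isCompact_uIcc).exists_bound_of_continuousOn hcont'
  have hz_mem : z ∈ closedBall z r := mem_closedBall_self hr.le
  have hderiv : ∀ t ∈ uIcc a b, ∀ w ∈ closedBall z r,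
      HasDerivAt (fun w => k t / (γ t - w)) (k t / (γ t - w) ^ 2) w := fun t ht w hw => by
    have := (((hasDerivAt_id w).const_sub (γ t)).inv (hne w hw t ht)).const_mul (k t)
    simpa [div_eq_mul_inv] using this
  refine (intervalIntegral.hasDerivAt_integral_of_dominated_loc_of_deriv_le (μ := volume)
    (F' := fun w t => k t / (γ t - w) ^ 2) (bound := fun _ => C) (closedBall_mem_nhds z hr) ?_
    (hcont z hz_mem).intervalIntegrable ?_ ?_
    intervalIntegrable_const ?_).2.differentiableAt.differentiableWithinAt
  · filter_upwards [closedBall_mem_nhds z hr] with w hw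
    exact (hcont w hw).intervalIntegrable.def'.aestronglyMeasurable
  · have : ContinuousOn (fun t => k t / (γ t - z) ^ 2) (uIcc a b) :=
      hcont'.comp (by fun_prop) fun t ht => (⟨hz_mem, ht⟩ : (z, t) ∈ closedBall z r ×ˢ uIcc a b)
    exact this.intervalIntegrable.def'.aestronglyMeasurable
  · exact .of_forall fun t ht w hw => hC (w, t) ⟨hw, uIoc_subset_uIcc ht⟩
  · exact .of_forall fun t ht w hw => hderiv t (uIoc_subset_uIcc ht) w hw

theorem hasSum_neg_div_mul_div_pow {a w z : ℂ} (h : ‖w‖ < ‖z‖) :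
    HasSum (fun n : ℕ => -(a / z) * (w / z) ^ n) (a / (w - z)) := by
  have hz : z ≠ 0 := norm_pos_iff.1 ((norm_nonneg w).trans_lt h)
  have hlt : ‖w / z‖ < 1 := by
    rw [norm_div]
    exact (div_lt_one (norm_pos_iff.2 hz)).2 h
  have hsum : -(a / z) * (1 - w / z)⁻¹ = a / (w - z) := by
    rw [one_sub_div hz, inv_div, neg_mul, div_mul_div_cancel₀ hz, ← div_neg, neg_sub]
  exact hsum ▸ (hasSum_geometric_of_norm_lt_one hlt).mul_left (-(a / z))

theorem integral_div_sub_eq_zero_of_moments {γ k : ℝ → ℂ} {a b : ℝ}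
    (hγ : ContinuousOn γ (uIcc a b)) (hk : ContinuousOn k (uIcc a b))
    (hmom : ∀ n : ℕ, ∫ t in a..b, γ t ^ n * k t = 0) {z : ℂ}
    (hz : ∀ t ∈ uIcc a b, ‖γ t‖ < ‖z‖) : ∫ t in a..b, k t / (γ t - z) = 0 := by
  obtain ⟨t₀, ht₀, hmax⟩ := isCompact_uIcc.exists_isMaxOn nonempty_uIcc hγ.norm
  obtain ⟨C, hC⟩ := isCompact_uIcc.exists_bound_of_continuousOn hk
  have hz0 : 0 < ‖z‖ := (norm_nonneg _).trans_lt (hz t₀ ht₀)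
  have hC0 : 0 ≤ C := (norm_nonneg _).trans (hC t₀ ht₀)
  have hratio : Summable fun n : ℕ => C / ‖z‖ * (‖γ t₀‖ / ‖z‖) ^ n :=
    (summable_geometric_of_lt_one (by positivity) ((div_lt_one hz0).2 (hz t₀ ht₀))).mul_left _
  have hbound (n : ℕ) (t : ℝ) (ht : t ∈ uIcc a b) :
      ‖-(k t / z) * (γ t / z) ^ n‖ ≤ C / ‖z‖ * (‖γ t₀‖ / ‖z‖) ^ n := by
    have hkC := hC t ht
    have hγt₀ : ‖γ t‖ ≤ ‖γ t₀‖ := hmax ht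
    rw [norm_mul, norm_neg, norm_div, norm_pow, norm_div]
    gcongr
  have hmeas (n : ℕ) : AEStronglyMeasurable (fun t => -(k t / z) * (γ t / z) ^ n)
      (volume.restrict (uIoc a b)) :=
    (ContinuousOn.intervalIntegrable (by fun_prop)).def'.aestronglyMeasurable
  have hterm (n : ℕ) : ∫ t in a..b, -(k t / z) * (γ t / z) ^ n = 0 := by
    rw [← mul_zero (-(z ^ (n + 1))⁻¹), ← hmom n, ← intervalIntegral.integral_const_mul]
    congr with t
    ring
  have hsum := intervalIntegral.hasSum_integral_of_dominated_convergence (μ := volume)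
    (fun n _ => C / ‖z‖ * (‖γ t₀‖ / ‖z‖) ^ n) hmeas
    (fun n => .of_forall fun t ht => hbound n t (uIoc_subset_uIcc ht))
    (.of_forall fun _ _ => hratio) intervalIntegrable_const
    (.of_forall fun t ht => hasSum_neg_div_mul_div_pow (hz t (uIoc_subset_uIcc ht)))
  simp_rw [hterm] at hsum
  exact hsum.unique hasSum_zero

/-! ### Normal coordinates along a regular loop -/

/-- A regular `C¹` parametrization of a Jordan curve in the plane, encoded as a `T`-periodic map of
the real line that is injective on a period. -/
structure IsRegularLoop (T : ℝ) (γ : ℝ → ℂ) : Prop where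
  pos : 0 < T
  contDiff : ContDiff ℝ 1 γ
  periodic : Periodic γ T
  injOn : InjOn γ (Ico 0 T)
  deriv_ne_zero : ∀ t, deriv γ t ≠ 0

/-- The point with normal coordinates `(t, ε)`: the foot point is `γ t`, and `ε` is the signed
distance along the normal `I * deriv γ t`, in units of the speed of `γ`. -/
noncomputable def normalPoint (γ : ℝ → ℂ) (t ε : ℝ) : ℂ :=
  γ t + ε * (I * deriv γ t)

/-- `c` is a width on which the collar of the loop `γ` is uniformly nondegenerate: for
`|ε| ≤ c` the distance from `normalPoint γ t ε` to `γ (t + u)` is at least `c` times the distance of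
the parameters `(0, ε)` and `(u, 0)`. -/
structure IsCollarWidth (T : ℝ) (γ : ℝ → ℂ) (c : ℝ) : Prop where
  pos : 0 < c
  le_norm_sub : ∀ {t u ε : ℝ}, |u| ≤ T / 2 → |ε| ≤ c →
    c * √(u ^ 2 + ε ^ 2) ≤ ‖γ (t + u) - normalPoint γ t ε‖

theorem apply_add_sub_normalPoint (γ : ℝ → ℂ) (t u ε : ℝ) :
    γ (t + u) - normalPoint γ t ε = u * dslope γ t (t + u) - ε * (I * deriv γ t) := by
  have h := sub_smul_dslope γ t (t + u)
  rw [add_sub_cancel_left, real_smul] at h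
  rw [h, normalPoint, sub_add_eq_sub_sub]

theorem continuous_normalPoint {γ : ℝ → ℂ} (hγ : ContDiff ℝ 1 γ) :
    Continuous fun p : ℝ × ℝ => normalPoint γ p.1 p.2 := by
  have := hγ.continuous
  have := hγ.continuous_deriv le_rfl
  unfold normalPoint
  fun_prop

namespace IsRegularLoop

variable {T : ℝ} {γ : ℝ → ℂ}

theorem continuous (hγ : IsRegularLoop T γ) : Continuous γ :=
  hγ.contDiff.continuous

theorem continuous_deriv (hγ : IsRegularLoop T γ) : Continuous (deriv γ) :=
  hγ.contDiff.continuous_deriv le_rfl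

theorem dslope_ne_zero (hγ : IsRegularLoop T γ) {t u : ℝ} (hu : |u| ≤ T / 2) :
    dslope γ t (t + u) ≠ 0 := by
  intro h
  have hT := hγ.pos
  obtain ⟨hu₁, hu₂⟩ := abs_le.1 hu
  rcases eq_or_ne u 0 with rfl | hu0
  · rw [add_zero, dslope_same] at h
    exact hγ.deriv_ne_zero t h
  · have heq : γ (t + u) = γ t := by rw [← sub_eq_zero, ← sub_smul_dslope, h, smul_zero]
    have hinj : InjOn γ (Ico (min t (t + u)) (min t (t + u) + T)) :=
      injOn_Ico_of_periodic hγ.periodic hT (a := 0) (by simpa using hγ.injOn) _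
    refine hu0 (add_eq_left.1 (hinj ⟨min_le_right _ _, ?_⟩ ⟨min_le_left _ _, ?_⟩ heq)) <;>
      rw [← min_add_add_right, lt_min_iff] <;> constructor <;> linarith

-- With `w = u + ε * I`, the norm is `‖γ (t + u) - normalPoint γ t ε‖`. It vanishes where the normal
-- meets the curve again; the term `|w.im * u|` excludes this, and is absorbed for small `ε`.
theorem collar_gauge_pos (hγ : IsRegularLoop T γ) {t u : ℝ} (hu : |u| ≤ T / 2) {w : ℂ}
    (hw : w ≠ 0) :
    0 < ‖w.re * dslope γ t (t + u) - w.im * (I * deriv γ t)‖ + |w.im * u| := by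
  rcases eq_or_ne (w.im * u) 0 with h0 | h0
  · refine add_pos_of_pos_of_nonneg (norm_pos_iff.2 ?_) (abs_nonneg _)
    rcases mul_eq_zero.1 h0 with him | rfl
    · have hre : (w.re : ℂ) ≠ 0 := by
        rw [ofReal_ne_zero]
        exact fun hre => hw (Complex.ext hre him)
      simpa [him, hre] using hγ.dslope_ne_zero hu
    · have hconj : w.re * dslope γ t (t + 0) - w.im * (I * deriv γ t) =
          (starRingEnd ℂ) w * deriv γ t := by
        rw [add_zero, dslope_same, ← mul_assoc, ← sub_mul]
        congr 1
        apply Complex.ext <;> simp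
      rw [hconj]
      exact mul_ne_zero ((map_ne_zero _).2 hw) (hγ.deriv_ne_zero t)
  · exact add_pos_of_nonneg_of_pos (norm_nonneg _) (abs_pos.2 h0)

theorem exists_pos_mul_norm_le_collar_gauge (hγ : IsRegularLoop T γ) :
    ∃ c > 0, ∀ t ∈ Icc 0 T, ∀ u : ℝ, |u| ≤ T / 2 → ∀ w : ℂ,
      c * ‖w‖ ≤ ‖w.re * dslope γ t (t + u) - w.im * (I * deriv γ t)‖ + |w.im * u| := by
  let gauge : ℝ × ℝ × ℂ → ℝ := fun p =>
    ‖p.2.2.re * dslope γ p.1 (p.1 + p.2.1) - p.2.2.im * (I * deriv γ p.1)‖ + |p.2.2.im * p.2.1|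
  have hcont : Continuous gauge := by
    have hdslope : Continuous fun p : ℝ × ℝ × ℂ => dslope γ p.1 (p.1 + p.2.1) :=
      (continuous_dslope_uncurry hγ.contDiff).comp
        (by fun_prop : Continuous fun p : ℝ × ℝ × ℂ => (p.1, p.1 + p.2.1))
    have := hγ.continuous_deriv
    fun_prop
  obtain ⟨c, hc, hle⟩ := (isCompact_Icc.prod (isCompact_Icc.prod
    (isCompact_sphere (0 : ℂ) 1))).exists_forall_le' (s := Icc 0 T ×ˢ Icc (-(T / 2)) (T / 2) ×ˢ _)
    hcont.continuousOn (a := 0) fun p hp =>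
      hγ.collar_gauge_pos (abs_le.2 hp.2.1) (ne_of_mem_sphere hp.2.2 one_ne_zero)
  refine ⟨c, hc, fun t ht u hu w => ?_⟩
  rcases eq_or_ne w 0 with rfl | hw
  · simp
  have hw0 := norm_pos_iff.2 hw
  have hhom : gauge (t, u, ((‖w‖⁻¹ : ℝ) : ℂ) * w) = ‖w‖⁻¹ * gauge (t, u, w) := by
    simp only [gauge, re_ofReal_mul, im_ofReal_mul, ofReal_mul, mul_assoc, ← mul_sub, norm_mul,
      abs_mul, norm_real, Real.norm_eq_abs, abs_inv, abs_norm, mul_add]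
  have hunit : ((‖w‖⁻¹ : ℝ) : ℂ) * w ∈ sphere (0 : ℂ) 1 := by simp [hw]
  have h := hle (t, u, _) ⟨ht, abs_le.1 hu, hunit⟩
  rwa [hhom, ← div_eq_inv_mul, le_div_iff₀ hw0] at h

theorem exists_isCollarWidth (hγ : IsRegularLoop T γ) : ∃ c, IsCollarWidth T γ c := by
  obtain ⟨c, hc, hle⟩ := hγ.exists_pos_mul_norm_le_collar_gauge
  refine ⟨c / 2, half_pos hc, fun {t u ε} hu hε => ?_⟩
  have hper : Periodic (fun t => γ (t + u) - normalPoint γ t ε) T := fun t => by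
    simp only [normalPoint, add_right_comm t T u, hγ.periodic _, periodic_deriv hγ.periodic t]
  obtain ⟨s, hs, hts⟩ := hper.exists_mem_Ico₀ hγ.pos t
  have h := hle s (Ico_subset_Icc_self hs) u hu (u + ε * I)
  simp only [add_re, ofReal_re, re_ofReal_mul, I_re, mul_zero, add_zero, add_im, ofReal_im,
    im_ofReal_mul, I_im, mul_one, zero_add, norm_add_mul_I, ← apply_add_sub_normalPoint] at h
  have hεu : |ε * u| ≤ c / 2 * √(u ^ 2 + ε ^ 2) := by
    rw [abs_mul]
    gcongr
    exact Real.abs_le_sqrt (le_add_of_nonneg_right (sq_nonneg ε))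
  rw [hts]
  linarith

end IsRegularLoop

namespace IsCollarWidth

variable {T c : ℝ} {γ : ℝ → ℂ}

theorem le_norm_deriv (hc : IsCollarWidth T γ c) (hT : 0 ≤ T) (t : ℝ) : c ≤ ‖deriv γ t‖ := by
  have hu : |(0 : ℝ)| ≤ T / 2 := by simpa using div_nonneg hT zero_le_two
  have h := hc.le_norm_sub (t := t) hu (abs_of_pos hc.pos).le
  rw [apply_add_sub_normalPoint] at h
  simp only [ne_eq, OfNat.ofNat_ne_zero, not_false_eq_true, zero_pow, zero_add, Real.sqrt_sq_eq_abs,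
    ofReal_zero, zero_mul, zero_sub, norm_neg, norm_mul, norm_real, Real.norm_eq_abs, norm_I,
    one_mul, abs_of_pos hc.pos] at h
  exact le_of_mul_le_mul_left h hc.pos

theorem normalPoint_notMem_range (hc : IsCollarWidth T γ c) (hT : 0 < T) (hper : Periodic γ T)
    {t ε : ℝ} (hε0 : ε ≠ 0) (hε : |ε| ≤ c) : normalPoint γ t ε ∉ range γ := by
  rintro ⟨s, hs⟩
  obtain ⟨y, hy, hsy⟩ := hper.exists_mem_Ico hT s (t - T / 2)
  have hu : |y - t| ≤ T / 2 := abs_le.2 ⟨by linarith [hy.1], by linarith [hy.2]⟩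
  have h := hc.le_norm_sub (t := t) hu hε
  rw [add_sub_cancel, ← hsy, hs, sub_self, norm_zero] at h
  exact h.not_gt (mul_pos hc.pos (Real.sqrt_pos.2 (by positivity)))

end IsCollarWidth

theorem eq_normalPoint_of_forall_norm_sub_le {γ : ℝ → ℂ} {z : ℂ} {t : ℝ}
    (hd : deriv γ t ≠ 0) (hmin : ∀ s, ‖z - γ t‖ ≤ ‖z - γ s‖) :
    z = normalPoint γ t ((z - γ t) / deriv γ t).im := by
  have hderiv : HasDerivAt (fun s => ‖z - γ s‖ ^ 2) (2 * inner ℝ (z - γ t) (-deriv γ t)) t :=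
    ((differentiableAt_of_deriv_ne_zero hd).hasDerivAt.const_sub z).norm_sq
  have hloc : IsLocalMin (fun s => ‖z - γ s‖ ^ 2) t :=
    .of_forall fun s => pow_le_pow_left₀ (norm_nonneg _) (hmin s) 2
  have hinner := hloc.hasDerivAt_eq_zero hderiv
  have hre : ((z - γ t) / deriv γ t).re = 0 := by
    rw [Complex.inner] at hinner
    rw [div_re, ← add_div, div_eq_zero_iff]
    left
    simp only [map_sub, mul_re, sub_re, sub_im, neg_re, neg_im, conj_re, conj_im] at hinner ⊢
    linarith
  have him : (((z - γ t) / deriv γ t).im : ℂ) * I = (z - γ t) / deriv γ t := by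
    apply Complex.ext <;> simp [hre]
  rw [normalPoint, ← mul_assoc, him, div_mul_cancel₀ _ hd, add_sub_cancel]

theorem IsRegularLoop.exists_normal_coordinates {T : ℝ} {γ : ℝ → ℂ} (hγ : IsRegularLoop T γ)
    (t₀ : ℝ) : ∃ τ ε : ℂ → ℝ, Tendsto τ (𝓝 (γ t₀)) (𝓝 t₀) ∧ Tendsto ε (𝓝 (γ t₀)) (𝓝 0) ∧
      ∀ z, z = normalPoint γ (τ z) (ε z) := by
  obtain ⟨c, hc⟩ := hγ.exists_isCollarWidth
  choose τ hτ hmin using exists_forall_norm_sub_le_of_periodic hγ.periodic hγ.pos hγ.continuous t₀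
  let ε : ℂ → ℝ := fun z => ((z - γ (τ z)) / deriv γ (τ z)).im
  have hτle (z : ℂ) : dist (τ z) t₀ ≤ 2 / c * dist z (γ t₀) := by
    have h := hc.le_norm_sub (t := t₀) (ε := 0) (hτ z) (by simpa using hc.pos.le)
    simp only [add_sub_cancel, normalPoint, ofReal_zero, zero_mul, add_zero, ne_eq,
      OfNat.ofNat_ne_zero, not_false_eq_true, zero_pow, Real.sqrt_sq_eq_abs] at h
    have htri := norm_sub_le_norm_sub_add_norm_sub (γ (τ z)) z (γ t₀)
    rw [norm_sub_rev (γ (τ z)) z] at htri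
    rw [Real.dist_eq, Complex.dist_eq, div_mul_eq_mul_div, le_div_iff₀' hc.pos]
    linarith [hmin z t₀]
  have hεle (z : ℂ) : dist (ε z) 0 ≤ 1 / c * dist z (γ t₀) := by
    rw [Real.dist_0_eq_abs, Complex.dist_eq, div_mul_eq_mul_div, one_mul]
    refine (abs_im_le_norm _).trans ?_
    rw [norm_div]
    exact div_le_div₀ (norm_nonneg _) (hmin z t₀) hc.pos (hc.le_norm_deriv hγ.pos.le _)
  have hdist (K : ℝ) : Tendsto (fun z => K * dist z (γ t₀)) (𝓝 (γ t₀)) (𝓝 0) := by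
    simpa using (tendsto_iff_dist_tendsto_zero.1 tendsto_id).const_mul K
  exact ⟨τ, ε, tendsto_iff_dist_tendsto_zero.2 (squeeze_zero (fun _ => dist_nonneg) hτle (hdist _)),
    tendsto_iff_dist_tendsto_zero.2 (squeeze_zero (fun _ => dist_nonneg) hεle (hdist _)),
    fun z => eq_normalPoint_of_forall_norm_sub_le (hγ.deriv_ne_zero _) (hmin z)⟩

/-! ### The Cauchy integral and its jump -/

/-- The Cauchy integral of the boundary data `h` along one period of the loop `γ`. -/
noncomputable def cauchyIntegral (T : ℝ) (γ h : ℝ → ℂ) (z : ℂ) : ℂ :=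
  (2 * π * I)⁻¹ * ∫ t in (0 : ℝ)..T, h t * deriv γ t / (γ t - z)

theorem differentiableOn_cauchyIntegral {T : ℝ} {γ h : ℝ → ℂ} (hγ : ContDiff ℝ 1 γ)
    (hh : Continuous h) : DifferentiableOn ℂ (cauchyIntegral T γ h) (range γ)ᶜ :=
  ((differentiableOn_integral_div_sub hγ.continuous.continuousOn
    (hh.mul (hγ.continuous_deriv le_rfl)).continuousOn).mono
    (compl_subset_compl.2 (image_subset_range γ _))).const_mul _

theorem IsRegularLoop.isCompact_range {T : ℝ} {γ : ℝ → ℂ} (hγ : IsRegularLoop T γ) :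
    IsCompact (range γ) :=
  hγ.periodic.compact_of_continuous hγ.pos.ne' hγ.continuous

theorem cauchyIntegral_eqOn_zero_of_moments {T : ℝ} {γ h : ℝ → ℂ} (hγ : IsRegularLoop T γ)
    (hh : Continuous h) (hmom : ∀ n : ℕ, ∫ t in (0 : ℝ)..T, γ t ^ n * (h t * deriv γ t) = 0)
    {z₀ : ℂ} (hz₀ : ∀ t, ‖γ t‖ < ‖z₀‖) :
    EqOn (cauchyIntegral T γ h) 0 (connectedComponentIn (range γ)ᶜ z₀) := by
  have hopen : IsOpen (range γ)ᶜ := hγ.isCompact_range.isClosed.isOpen_compl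
  have hmem : z₀ ∈ (range γ)ᶜ := by
    rintro ⟨t, rfl⟩
    exact (hz₀ t).false
  have hanalytic : AnalyticOnNhd ℂ (cauchyIntegral T γ h) (connectedComponentIn (range γ)ᶜ z₀) :=
    ((differentiableOn_cauchyIntegral hγ.contDiff hh).analyticOnNhd hopen).mono
      (connectedComponentIn_subset _ _)
  refine hanalytic.eqOn_zero_of_preconnected_of_eventuallyEq_zero
    isPreconnected_connectedComponentIn (mem_connectedComponentIn hmem) ?_
  obtain ⟨_, ⟨t₁, rfl⟩, hmax⟩ := hγ.isCompact_range.exists_isMaxOn (range_nonempty γ)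
    continuous_norm.continuousOn
  filter_upwards [continuous_norm.continuousAt.eventually (lt_mem_nhds (hz₀ t₁))] with z hz
  have hzero : ∫ t in (0 : ℝ)..T, h t * deriv γ t / (γ t - z) = 0 :=
    integral_div_sub_eq_zero_of_moments hγ.continuous.continuousOn
      (hh.mul hγ.continuous_deriv).continuousOn hmom
      fun t _ => (hmax (mem_range_self t)).trans_lt hz
  rw [cauchyIntegral, hzero, mul_zero, Pi.zero_apply]

/-- The integrand of the jump of the Cauchy integral between the points with normal coordinates
`(t, ε)` and `(t, -ε)`, in the rescaled parameter `v` of the curve point `γ (t + ε * v)`. -/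
noncomputable def jumpIntegrand (γ h : ℝ → ℂ) (t ε v : ℝ) : ℂ :=
  (π : ℂ)⁻¹ * (h (t + ε * v) * deriv γ (t + ε * v) * deriv γ t) /
    ((v * dslope γ t (t + ε * v)) ^ 2 + deriv γ t ^ 2)

theorem jumpIntegrand_eq {γ h : ℝ → ℂ} {t ε v : ℝ} (hε : ε ≠ 0)
    (h₁ : normalPoint γ t ε ∉ range γ) (h₂ : normalPoint γ t (-ε) ∉ range γ) :
    jumpIntegrand γ h t ε v = (2 * π * I)⁻¹ * (ε *
      (h (t + ε * v) * deriv γ (t + ε * v) / (γ (t + ε * v) - normalPoint γ t ε) -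
        h (t + ε * v) * deriv γ (t + ε * v) / (γ (t + ε * v) - normalPoint γ t (-ε)))) := by
  have hε' : (ε : ℂ) ≠ 0 := ofReal_ne_zero.2 hε
  have hsub (σ : ℝ) : γ (t + ε * v) - normalPoint γ t (σ * ε) =
      ε * (v * dslope γ t (t + ε * v) - σ * (I * deriv γ t)) := by
    rw [apply_add_sub_normalPoint]
    push_cast
    ring
  have hsub₁ := hsub 1
  have hsub₂ := hsub (-1)
  simp only [one_mul, neg_mul, ofReal_one, ofReal_neg, sub_neg_eq_add] at hsub₁ hsub₂
  have hne₁ := sub_ne_zero.2 fun heq => h₁ ⟨t + ε * v, heq⟩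
  have hne₂ := sub_ne_zero.2 fun heq => h₂ ⟨t + ε * v, heq⟩
  rw [hsub₁] at hne₁ ⊢
  rw [hsub₂] at hne₂ ⊢
  have hfactor : (v * dslope γ t (t + ε * v)) ^ 2 + deriv γ t ^ 2 =
      (v * dslope γ t (t + ε * v) - I * deriv γ t) *
        (v * dslope γ t (t + ε * v) + I * deriv γ t) := by
    linear_combination deriv γ t ^ 2 * I_sq
  rw [jumpIntegrand, hfactor, div_sub_div _ _ hne₁ hne₂]
  field_simp [right_ne_zero_of_mul hne₁, right_ne_zero_of_mul hne₂]
  ring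

theorem cauchyIntegral_normalPoint_sub {T c : ℝ} {γ h : ℝ → ℂ} (hγ : IsRegularLoop T γ)
    (hc : IsCollarWidth T γ c) (hh : Continuous h) (hper : Periodic h T) (t : ℝ) {ε : ℝ}
    (hε : ε ∈ Ioc 0 c) :
    cauchyIntegral T γ h (normalPoint γ t ε) - cauchyIntegral T γ h (normalPoint γ t (-ε)) =
      ∫ v in {v : ℝ | |ε * v| ≤ T / 2}, jumpIntegrand γ h t ε v := by
  obtain ⟨hε0, hεc⟩ := hε
  have h₁ : normalPoint γ t ε ∉ range γ :=
    hc.normalPoint_notMem_range hγ.pos hγ.periodic hε0.ne' (by rwa [abs_of_pos hε0])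
  have h₂ : normalPoint γ t (-ε) ∉ range γ :=
    hc.normalPoint_notMem_range hγ.pos hγ.periodic (neg_ne_zero.2 hε0.ne')
      (by rwa [abs_neg, abs_of_pos hε0])
  let kernel : ℂ → ℝ → ℂ := fun z s => h s * deriv γ s / (γ s - z)
  have hint {z : ℂ} (hz : z ∉ range γ) : IntervalIntegrable (kernel z) volume 0 T :=
    ((hh.mul hγ.continuous_deriv).div (hγ.continuous.sub continuous_const)
      fun s => sub_ne_zero.2 fun heq => hz ⟨s, heq⟩).intervalIntegrable _ _
  have hkper : Periodic
      (fun s => kernel (normalPoint γ t ε) s - kernel (normalPoint γ t (-ε)) s) T :=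
    fun s => by simp only [kernel, hper s, periodic_deriv hγ.periodic s, hγ.periodic s]
  rw [cauchyIntegral, cauchyIntegral, ← mul_sub,
    ← intervalIntegral.integral_sub (hint h₁) (hint h₂),
    integral_eq_integral_smul_add_mul_of_periodic hkper hγ.pos.le t hε0, ← integral_const_mul]
  simp_rw [jumpIntegrand_eq hε0.ne' h₁ h₂, real_smul]
  rfl

theorem IsCollarWidth.le_norm_jumpIntegrand_denom {T c : ℝ} {γ : ℝ → ℂ} (hc : IsCollarWidth T γ c)
    {t ε v : ℝ} (hε : ε ∈ Ioc 0 c) (hv : |ε * v| ≤ T / 2) :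
    c ^ 2 * (1 + v ^ 2) ≤ ‖(v * dslope γ t (t + ε * v)) ^ 2 + deriv γ t ^ 2‖ := by
  obtain ⟨hε0, hεc⟩ := hε
  have hside {σ : ℝ} (hσ : |σ| = 1) :
      c * √(1 + v ^ 2) ≤ ‖v * dslope γ t (t + ε * v) - σ * (I * deriv γ t)‖ := by
    have hle := hc.le_norm_sub (t := t) (ε := ε * σ) hv
      (by rwa [abs_mul, hσ, mul_one, abs_of_pos hε0])
    have hσ2 : σ ^ 2 = 1 := by rw [← sq_abs, hσ, one_pow]
    have hfactor : γ (t + ε * v) - normalPoint γ t (ε * σ) =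
        ε * (v * dslope γ t (t + ε * v) - σ * (I * deriv γ t)) := by
      rw [apply_add_sub_normalPoint]
      push_cast
      ring
    rw [mul_pow, mul_pow, hσ2, ← mul_add, add_comm, Real.sqrt_mul (sq_nonneg ε),
      Real.sqrt_sq hε0.le, hfactor, norm_mul, norm_real, Real.norm_of_nonneg hε0.le,
      mul_left_comm] at hle
    exact le_of_mul_le_mul_left hle hε0
  have h₁ := hside (σ := 1) abs_one
  have h₂ := hside (σ := -1) (by simp)
  calc c ^ 2 * (1 + v ^ 2) = c * √(1 + v ^ 2) * (c * √(1 + v ^ 2)) := by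
        rw [mul_mul_mul_comm, Real.mul_self_sqrt (by positivity), sq]
    _ ≤ _ := mul_le_mul h₁ h₂ (mul_nonneg hc.pos.le (Real.sqrt_nonneg _)) (norm_nonneg _)
    _ = _ := by
        rw [← norm_mul]
        congr 1
        push_cast
        linear_combination (-deriv γ t ^ 2) * I_sq

theorem exists_norm_jumpIntegrand_le {T c : ℝ} {γ h : ℝ → ℂ} (hγ : IsRegularLoop T γ)
    (hc : IsCollarWidth T γ c) (hh : Continuous h) (hper : Periodic h T) :
    ∃ K ≥ 0, ∀ t, ∀ ε ∈ Ioc 0 c, ∀ v, |ε * v| ≤ T / 2 →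
      ‖jumpIntegrand γ h t ε v‖ ≤ K * (1 + v ^ 2)⁻¹ := by
  obtain ⟨H, hH⟩ := (hper.isBounded_of_continuous hγ.pos.ne' hh).exists_norm_le
  obtain ⟨M, hM⟩ := ((periodic_deriv hγ.periodic).isBounded_of_continuous hγ.pos.ne'
    hγ.continuous_deriv).exists_norm_le
  rw [forall_mem_range] at hH hM
  have hH0 : 0 ≤ H := (norm_nonneg _).trans (hH 0)
  have hM0 : 0 ≤ M := (norm_nonneg _).trans (hM 0)
  have hc0 := hc.pos
  refine ⟨π⁻¹ * (H * M * M) / c ^ 2, by positivity, fun t ε hε v hv => ?_⟩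
  rw [jumpIntegrand, norm_div, norm_mul, norm_mul, norm_mul, norm_inv, norm_real,
    Real.norm_of_nonneg Real.pi_pos.le, ← div_eq_mul_inv, div_div]
  gcongr
  exacts [hH _, hM _, hM _, hc.le_norm_jumpIntegrand_denom hε hv]

theorem jumpIntegrand_zero {γ h : ℝ → ℂ} {t : ℝ} (hd : deriv γ t ≠ 0) (v : ℝ) :
    jumpIntegrand γ h t 0 v = (π : ℂ)⁻¹ * h t * ((1 + v ^ 2)⁻¹ : ℝ) := by
  have hv : (1 + v ^ 2 : ℂ) ≠ 0 := by exact_mod_cast (by positivity : 1 + v ^ 2 ≠ 0)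
  have hdenom : (v * deriv γ t) ^ 2 + deriv γ t ^ 2 = (1 + v ^ 2) * deriv γ t ^ 2 := by ring
  rw [jumpIntegrand, zero_mul, add_zero, dslope_same, hdenom]
  push_cast
  field_simp

theorem continuousAt_jumpIntegrand_zero {γ h : ℝ → ℂ} (hγ : ContDiff ℝ 1 γ) (hh : Continuous h)
    {t : ℝ} (hd : deriv γ t ≠ 0) (v : ℝ) :
    ContinuousAt (fun p : ℝ × ℝ => jumpIntegrand γ h p.1 p.2 v) (t, 0) := by
  have hdslope : Continuous fun p : ℝ × ℝ => dslope γ p.1 (p.1 + p.2 * v) :=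
    (continuous_dslope_uncurry hγ).comp
      (by fun_prop : Continuous fun p : ℝ × ℝ => (p.1, p.1 + p.2 * v))
  have := hγ.continuous_deriv le_rfl
  refine ContinuousAt.div (by fun_prop) (by fun_prop) ?_
  have hv : (1 + v ^ 2 : ℂ) ≠ 0 := by exact_mod_cast (by positivity : 1 + v ^ 2 ≠ 0)
  have hdenom : (v * deriv γ t) ^ 2 + deriv γ t ^ 2 = (1 + v ^ 2) * deriv γ t ^ 2 := by ring
  rw [zero_mul, add_zero, dslope_same, hdenom]
  exact mul_ne_zero hv (pow_ne_zero 2 hd)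

theorem measurable_jumpIntegrand {γ h : ℝ → ℂ} (hγ : ContDiff ℝ 1 γ) (hh : Continuous h)
    (t ε : ℝ) : Measurable (jumpIntegrand γ h t ε) := by
  have hdslope : Continuous fun v : ℝ => dslope γ t (t + ε * v) :=
    (continuous_dslope_uncurry hγ).comp (by fun_prop : Continuous fun v : ℝ => (t, t + ε * v))
  have := hγ.continuous_deriv le_rfl
  exact Measurable.div (Continuous.measurable (by fun_prop)) (Continuous.measurable (by fun_prop))

theorem tendsto_indicator_jumpIntegrand {T : ℝ} {γ h : ℝ → ℂ} (hγ : IsRegularLoop T γ)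
    (hh : Continuous h) (t₀ v : ℝ) :
    Tendsto (fun p : ℝ × ℝ => {v | |p.2 * v| ≤ T / 2}.indicator (jumpIntegrand γ h p.1 p.2) v)
      (𝓝 t₀ ×ˢ 𝓝[>] 0) (𝓝 ((π : ℂ)⁻¹ * h t₀ * ((1 + v ^ 2)⁻¹ : ℝ))) := by
  have hle : 𝓝 t₀ ×ˢ 𝓝[>] 0 ≤ 𝓝 (t₀, (0 : ℝ)) :=
    nhds_prod_eq (x := t₀) (y := (0 : ℝ)) ▸ Filter.prod_mono_right _ nhdsWithin_le_nhds
  have hmem : ∀ᶠ p : ℝ × ℝ in 𝓝 (t₀, 0), |p.2 * v| < T / 2 :=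
    (by fun_prop : Continuous fun p : ℝ × ℝ => |p.2 * v|).continuousAt.eventually_lt_const
      (by simpa using hγ.pos)
  have hlim := continuousAt_jumpIntegrand_zero hγ.contDiff hh (hγ.deriv_ne_zero t₀) v
  rw [ContinuousAt, jumpIntegrand_zero (hγ.deriv_ne_zero t₀)] at hlim
  exact (hlim.congr' (hmem.mono fun p hp =>
    (indicator_of_mem (s := {v | |p.2 * v| ≤ T / 2}) hp.le _).symm)).mono_left hle

theorem tendsto_cauchyIntegral_jump {T : ℝ} {γ h : ℝ → ℂ} (hγ : IsRegularLoop T γ)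
    (hh : Continuous h) (hper : Periodic h T) (t₀ : ℝ) :
    Tendsto (fun p : ℝ × ℝ => cauchyIntegral T γ h (normalPoint γ p.1 p.2) -
      cauchyIntegral T γ h (normalPoint γ p.1 (-p.2))) (𝓝 t₀ ×ˢ 𝓝[>] 0) (𝓝 (h t₀)) := by
  obtain ⟨c, hc⟩ := hγ.exists_isCollarWidth
  obtain ⟨K, hK0, hK⟩ := exists_norm_jumpIntegrand_le hγ hc hh hper
  let F : ℝ × ℝ → ℝ → ℂ := fun p => {v | |p.2 * v| ≤ T / 2}.indicator (jumpIntegrand γ h p.1 p.2)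
  have hmeas (ε : ℝ) : MeasurableSet {v | |ε * v| ≤ T / 2} :=
    measurableSet_le (by fun_prop) measurable_const
  have hε : ∀ᶠ p : ℝ × ℝ in 𝓝 t₀ ×ˢ 𝓝[>] 0, p.2 ∈ Ioc 0 c :=
    tendsto_snd.eventually (Ioc_mem_nhdsGT hc.pos)
  have hjump : ∀ᶠ p : ℝ × ℝ in 𝓝 t₀ ×ˢ 𝓝[>] 0, ∫ v, F p v =
      cauchyIntegral T γ h (normalPoint γ p.1 p.2) -
        cauchyIntegral T γ h (normalPoint γ p.1 (-p.2)) := by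
    filter_upwards [hε] with p hp
    rw [cauchyIntegral_normalPoint_sub hγ hc hh hper p.1 hp, integral_indicator (hmeas _)]
  have hbound : ∀ᶠ p : ℝ × ℝ in 𝓝 t₀ ×ˢ 𝓝[>] 0, ∀ᵐ v, ‖F p v‖ ≤ K * (1 + v ^ 2)⁻¹ := by
    filter_upwards [hε] with p hp
    refine .of_forall fun v => ?_
    rw [norm_indicator_eq_indicator_norm]
    exact indicator_apply_le' (hK p.1 p.2 hp v) fun _ => by positivity
  have hintegral : ∫ v : ℝ, (π : ℂ)⁻¹ * h t₀ * ((1 + v ^ 2)⁻¹ : ℝ) = h t₀ := by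
    rw [integral_const_mul, integral_complex_ofReal, integral_univ_inv_one_add_sq, mul_right_comm,
      inv_mul_cancel₀ (ofReal_ne_zero.2 Real.pi_ne_zero), one_mul]
  rw [← hintegral]
  exact (tendsto_integral_filter_of_dominated_convergence _
    (.of_forall fun p => ((measurable_jumpIntegrand hγ.contDiff hh _ _).indicator
      (hmeas _)).aestronglyMeasurable) hbound
    (integrable_inv_one_add_sq.const_mul K)
    (.of_forall (tendsto_indicator_jumpIntegrand hγ hh t₀))).congr' hjump

/-! ### Boundary values from inside -/

/-- The one-sided collar of width `c` of the curve `γ`, on the side given by the sign `σ = ±1`. -/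
def collarSide (γ : ℝ → ℂ) (c σ : ℝ) : Set ℂ :=
  (fun p : ℝ × ℝ => normalPoint γ p.1 (σ * p.2)) '' univ ×ˢ Ioc 0 c

section Sides

variable {T c : ℝ} {γ : ℝ → ℂ}

theorem isPreconnected_collarSide (hγ : ContDiff ℝ 1 γ) (c σ : ℝ) :
    IsPreconnected (collarSide γ c σ) := by
  have hcont : Continuous fun p : ℝ × ℝ => normalPoint γ p.1 (σ * p.2) :=
    (continuous_normalPoint hγ).comp (by fun_prop : Continuous fun p : ℝ × ℝ => (p.1, σ * p.2))
  exact (isPreconnected_univ.prod isPreconnected_Ioc).image _ hcont.continuousOn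

theorem disjoint_collarSide_range (hγ : IsRegularLoop T γ) (hc : IsCollarWidth T γ c) {σ : ℝ}
    (hσ : |σ| = 1) : Disjoint (collarSide γ c σ) (range γ) := by
  rw [Set.disjoint_left]
  rintro _ ⟨⟨t, ε⟩, ⟨-, hε0, hεc⟩, rfl⟩
  have hσ0 : σ ≠ 0 := abs_ne_zero.1 (hσ ▸ one_ne_zero)
  exact hc.normalPoint_notMem_range hγ.pos hγ.periodic (mul_ne_zero hσ0 hε0.ne')
    (by rwa [abs_mul, hσ, one_mul, abs_of_pos hε0])

theorem exists_normalPoint_mem_collarSide {t ε : ℝ} (hε0 : ε ≠ 0) (hε : |ε| ≤ c) :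
    ∃ σ : ℝ, |σ| = 1 ∧ ε = σ * |ε| ∧ normalPoint γ t ε ∈ collarSide γ c σ := by
  have hmul : ε / |ε| * |ε| = ε := div_mul_cancel₀ _ (abs_ne_zero.2 hε0)
  exact ⟨ε / |ε|, by rw [abs_div, abs_abs, div_self (abs_ne_zero.2 hε0)], hmul.symm, (t, |ε|),
    ⟨mem_univ _, abs_pos.2 hε0, hε⟩, by simp only [hmul]⟩

theorem exists_collarSide_subset (hγ : IsRegularLoop T γ) (hc : IsCollarWidth T γ c) {V : Set ℂ}
    (hV : IsOpen V) (hdisj : Disjoint V (range γ)) (hne : (frontier V).Nonempty)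
    (hfr : frontier V ⊆ range γ) : ∃ σ : ℝ, |σ| = 1 ∧ collarSide γ c σ ⊆ V := by
  obtain ⟨x, hx⟩ := hne
  obtain ⟨t₀, rfl⟩ := hfr hx
  obtain ⟨τ, ε, -, hε, hcoord⟩ := hγ.exists_normal_coordinates t₀
  have hsmall : ∀ᶠ z in 𝓝 (γ t₀), |ε z| < c :=
    hε.abs.eventually_lt_const (by simpa using hc.pos)
  obtain ⟨z, hzV, hzc⟩ :=
    ((mem_closure_iff_frequently.1 (frontier_subset_closure hx)).and_eventually hsmall).exists
  have hε0 : ε z ≠ 0 := fun h0 => by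
    have hz := hcoord z
    rw [h0, normalPoint, ofReal_zero, zero_mul, add_zero] at hz
    exact hdisj.notMem_of_mem_left hzV ⟨τ z, hz.symm⟩
  obtain ⟨σ, hσ, -, hmem⟩ := exists_normalPoint_mem_collarSide (γ := γ) (t := τ z) hε0 hzc.le
  rw [← hcoord] at hmem
  exact ⟨σ, hσ, subset_of_isPreconnected_of_disjoint_frontier
    (isPreconnected_collarSide hγ.contDiff c σ) hV
    ((disjoint_collarSide_range hγ hc hσ).mono_right hfr) ⟨z, hmem, hzV⟩⟩

theorem exists_collarSide_subset_connectedComponentIn (hγ : IsRegularLoop T γ)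
    (hc : IsCollarWidth T γ c) {z₀ : ℂ} (hz₀ : z₀ ∉ range γ) :
    ∃ σ : ℝ, |σ| = 1 ∧ collarSide γ c σ ⊆ connectedComponentIn (range γ)ᶜ z₀ := by
  have hopen : IsOpen (range γ)ᶜ := hγ.isCompact_range.isClosed.isOpen_compl
  have hsub := connectedComponentIn_subset (range γ)ᶜ z₀
  exact exists_collarSide_subset hγ hc hopen.connectedComponentIn
    (subset_compl_iff_disjoint_right.1 hsub)
    (nonempty_frontier_iff.2 ⟨⟨z₀, mem_connectedComponentIn hz₀⟩,
      fun h => hsub (h ▸ mem_univ (γ 0)) (mem_range_self 0)⟩)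
    ((frontier_connectedComponentIn_subset_compl hopen z₀).trans (compl_compl _).le)

theorem mul_pos_of_normalPoint_notMem_collarSide {σ t ε : ℝ} (hσ : |σ| = 1) (hε : |ε| ≤ c)
    (hrange : normalPoint γ t ε ∉ range γ) (hside : normalPoint γ t ε ∉ collarSide γ c (-σ)) :
    0 < σ * ε := by
  have hε0 : ε ≠ 0 := by
    rintro rfl
    exact hrange ⟨t, by simp [normalPoint]⟩
  obtain ⟨σ', hσ', hε', hmem⟩ := exists_normalPoint_mem_collarSide (γ := γ) (t := t) hε0 hε
  rcases abs_eq_abs.1 (hσ'.trans hσ.symm) with rfl | rfl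
  · rw [hε', ← mul_assoc, ← abs_mul_abs_self, hσ', one_mul, one_mul]
    exact abs_pos.2 hε0
  · exact absurd hmem hside

theorem tendsto_mul_cauchyIntegral_nhdsWithin {h : ℝ → ℂ} (hγ : IsRegularLoop T γ)
    (hc : IsCollarWidth T γ c) (hh : Continuous h) (hper : Periodic h T) {D E : Set ℂ}
    (hDr : Disjoint D (range γ)) (hDE : Disjoint D E) {σ : ℝ} (hσ : |σ| = 1)
    (hσE : collarSide γ c (-σ) ⊆ E) (hzero : EqOn (cauchyIntegral T γ h) 0 E) (t₀ : ℝ) :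
    Tendsto (fun z => σ * cauchyIntegral T γ h z) (𝓝[D] γ t₀) (𝓝 (h t₀)) := by
  obtain ⟨τ, ε, hτ, hε, hcoord⟩ := hγ.exists_normal_coordinates t₀
  have hσ2 : σ * σ = 1 := by rw [← abs_mul_abs_self, hσ, one_mul]
  have hσε (z : ℂ) : |σ * ε z| = |ε z| := by rw [abs_mul, hσ, one_mul]
  have hsmall : ∀ᶠ z in 𝓝[D] γ t₀, z ∈ D ∧ |ε z| < c :=
    eventually_mem_nhdsWithin.and (nhdsWithin_le_nhds
      (hε.abs.eventually_lt_const (by simpa using hc.pos)))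
  have hpos : ∀ z, z ∈ D ∧ |ε z| < c → σ * ε z ∈ Ioo 0 c := fun z ⟨hzD, hzc⟩ =>
    ⟨mul_pos_of_normalPoint_notMem_collarSide hσ hzc.le
      (hcoord z ▸ hDr.notMem_of_mem_left hzD)
      (hcoord z ▸ fun hmem => hDE.notMem_of_mem_left hzD (hσE hmem)),
      (le_abs_self _).trans_lt (hσε z ▸ hzc)⟩
  have hmirror : ∀ᶠ z in 𝓝[D] γ t₀, cauchyIntegral T γ h (normalPoint γ (τ z) (σ * ε z)) -
      cauchyIntegral T γ h (normalPoint γ (τ z) (-(σ * ε z))) = σ * cauchyIntegral T γ h z := by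
    filter_upwards [hsmall] with z hz
    have hside : normalPoint γ (τ z) (-σ * (σ * ε z)) ∈ E :=
      hσE ⟨(τ z, σ * ε z), ⟨mem_univ _, Ioo_subset_Ioc_self (hpos z hz)⟩, rfl⟩
    rw [neg_mul, ← mul_assoc, hσ2, one_mul] at hside
    rcases eq_or_eq_neg_of_abs_eq hσ with rfl | rfl
    · rw [one_mul, hzero hside, ← hcoord, Pi.zero_apply, sub_zero, ofReal_one, one_mul]
    · rw [neg_one_mul, neg_neg, hzero hside, ← hcoord, Pi.zero_apply, zero_sub, ofReal_neg,
        ofReal_one, neg_one_mul]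
  have hlim : Tendsto (fun z => (τ z, σ * ε z)) (𝓝[D] γ t₀) (𝓝 t₀ ×ˢ 𝓝[>] 0) := by
    refine (hτ.mono_left nhdsWithin_le_nhds).prodMk
      (tendsto_nhdsWithin_iff.2 ⟨?_, hsmall.mono fun z hz => (hpos z hz).1⟩)
    simpa using (hε.mono_left nhdsWithin_le_nhds).const_mul σ
  exact ((tendsto_cauchyIntegral_jump hγ hh hper t₀).comp hlim).congr' hmirror

theorem exists_continuousOn_closure_of_moments {h : ℝ → ℂ} (hγ : IsRegularLoop T γ)
    (hh : Continuous h) (hper : Periodic h T) {D : Set ℂ} (hD : IsOpen D)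
    (hDb : Bornology.IsBounded D) (hfr : frontier D = range γ)
    (hmom : ∀ n : ℕ, ∫ t in (0 : ℝ)..T, γ t ^ n * (h t * deriv γ t) = 0) :
    ∃ F : ℂ → ℂ, ContinuousOn F (closure D) ∧ DifferentiableOn ℂ F D ∧ ∀ t, F (γ t) = h t := by
  obtain ⟨c, hc⟩ := hγ.exists_isCollarWidth
  obtain ⟨R, hR⟩ := hDb.closure.exists_norm_le
  obtain ⟨z₀, hz₀⟩ := NormedSpace.exists_lt_norm ℂ ℂ R
  have hγcl (t : ℝ) : γ t ∈ closure D := frontier_subset_closure (hfr ▸ mem_range_self t)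
  have hz₀cl : z₀ ∉ closure D := fun hmem => (hR z₀ hmem).not_gt hz₀
  have hzero := cauchyIntegral_eqOn_zero_of_moments hγ hh hmom
    fun t => (hR _ (hγcl t)).trans_lt hz₀
  have hDr : Disjoint D (range γ) := hfr ▸ (disjoint_frontier_iff_isOpen.2 hD).symm
  have hDE : Disjoint D (connectedComponentIn (range γ)ᶜ z₀) :=
    hfr ▸ disjoint_connectedComponentIn_compl_frontier hD fun hmem => hz₀cl (subset_closure hmem)
  obtain ⟨σ, hσ, hσE⟩ := exists_collarSide_subset_connectedComponentIn hγ hc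
    (hfr ▸ fun hmem => hz₀cl (frontier_subset_closure hmem) : z₀ ∉ range γ)
  have hlim := tendsto_mul_cauchyIntegral_nhdsWithin (σ := -σ) hγ hc hh hper hDr hDE
    (by rwa [abs_neg]) (by rwa [neg_neg]) hzero
  have hdiff : DifferentiableOn ℂ (fun z => (-σ : ℝ) * cauchyIntegral T γ h z) D :=
    ((differentiableOn_cauchyIntegral hγ.contDiff hh).mono
      (subset_compl_iff_disjoint_right.2 hDr)).const_mul _
  have heq : EqOn (extendFrom D fun z => (-σ : ℝ) * cauchyIntegral T γ h z)
      (fun z => (-σ : ℝ) * cauchyIntegral T γ h z) D :=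
    extendFrom_extends hdiff.continuousOn
  refine ⟨extendFrom D fun z => (-σ : ℝ) * cauchyIntegral T γ h z,
    continuousOn_extendFrom subset_rfl fun z hz => ?_, hdiff.congr heq,
    fun t => extendFrom_eq (hγcl t) (hlim t)⟩
  by_cases hzD : z ∈ D
  · exact ⟨_, hdiff.continuousOn z hzD⟩
  · obtain ⟨t, rfl⟩ : z ∈ range γ := hfr ▸ hD.frontier_eq ▸ ⟨hz, hzD⟩
    exact ⟨_, hlim t⟩

end Sides

theorem integral_mul_deriv_eq_zero_of_forall_sum {ι : Type*} [Fintype ι] {a b : ℝ}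
    {g : ℝ → ι → ℂ} (hmom : ∀ f : ι → (ι → ℂ) → ℂ, (∀ i, Differentiable ℂ (f i)) →
      ∫ t in a..b, ∑ i, f i (g t) * deriv (fun s => g s i) t = 0)
    {f : (ι → ℂ) → ℂ} (hf : Differentiable ℂ f) (i₀ : ι) :
    ∫ t in a..b, f (g t) * deriv (fun s => g s i₀) t = 0 := by
  classical
  have hdiff (i : ι) : Differentiable ℂ ((Pi.single i₀ f : ι → (ι → ℂ) → ℂ) i) := by
    rcases eq_or_ne i i₀ with rfl | hi
    · rwa [Pi.single_eq_same]
    · rw [Pi.single_eq_of_ne hi]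
      exact differentiable_const 0
  rw [← hmom (Pi.single i₀ f) hdiff]
  refine intervalIntegral.integral_congr fun t _ => ?_
  rw [Finset.sum_eq_single i₀ (fun i _ hi => by rw [Pi.single_eq_of_ne hi, Pi.zero_apply, zero_mul])
    (by simp), Pi.single_eq_same]

theorem boundaries_of_holomorphic_disks_general {ι : Type*} (i₀ : ι) {T : ℝ}
    {D : Set ℂ} (hD : IsOpen D) (hDb : Bornology.IsBounded D) {g : ℝ → ι → ℂ} (hg : Continuous g)
    (hgper : Periodic g T) (hγ : IsRegularLoop T (fun t => g t i₀))
    (hfr : (fun t => g t i₀) '' Ico 0 T = frontier D)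
    (hmom : ∀ (a : ι) (n : ℕ),
      ∫ t in (0 : ℝ)..T, g t i₀ ^ n * (g t a * deriv (fun s => g s i₀) t) = 0) :
    ∃ G : ℂ → ι → ℂ, ContinuousOn G (closure D) ∧ DifferentiableOn ℂ G D ∧
      ∀ t, G (g t i₀) = g t := by
  have hrange : frontier D = range fun t => g t i₀ := by
    refine hfr ▸ (image_subset_range _ _).antisymm ?_
    rintro _ ⟨t, rfl⟩
    obtain ⟨s, hs, hts⟩ := hγ.periodic.exists_mem_Ico₀ hγ.pos t
    exact ⟨s, hs, hts.symm⟩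
  choose F hFc hFd hFg using fun a => exists_continuousOn_closure_of_moments hγ
    ((continuous_apply a).comp hg) (fun t => congr_fun (hgper t) a) hD hDb hrange (hmom a)
  exact ⟨fun z a => F a z, continuousOn_pi.2 hFc, differentiableOn_pi.2 hFd,
    fun t => funext fun a => hFg a t⟩

end

/-- Corollary 4.1, local Wermer–Harvey–Lawson: let `D ⊂ ℂ` be a bounded simply
connected domain with `C²` boundary, and `g : S¹ → ℂ^m` a `C²` embedded closed curve
(`2π`-periodic, injective on a period, with nonvanishing derivative) whose last complex
coordinate parametrizes `∂D` as an embedding.  If `∫_{g(S¹)} φ = 0` for every holomorphic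
1-form `φ = Σ_a f_a(z) dz^a` (each `f_a` entire on `ℂ^m`), then there is a holomorphic map
`G : D̄ → ℂ^m`, continuous up to the boundary, with `G(∂D) = g(S¹)`.
Here `ℂ^m` is `Fin (m+1) → ℂ` and the distinguished projection is the last coordinate. -/
theorem boundaries_of_holomorphic_disks
    (m : ℕ) (D : Set ℂ)
    (hD : IsOpen D) (hDb : Bornology.IsBounded D) (hDc : IsConnected D)
    (hDsc : SimplyConnectedSpace D) (hC2 : HasC2Boundary D)
    (g : ℝ → Fin (m + 1) → ℂ) (hg : ContDiff ℝ 2 g)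
    (hgper : Function.Periodic g (2 * π))
    (hginj : Set.InjOn g (Set.Ico 0 (2 * π)))
    (hgreg : ∀ t : ℝ, deriv g t ≠ 0)
    (hlast : (fun t => g t (Fin.last m)) '' Set.Ico 0 (2 * π) = frontier D)
    (hlastinj : Set.InjOn (fun t => g t (Fin.last m)) (Set.Ico 0 (2 * π)))
    (hlastreg : ∀ t : ℝ, deriv (fun s => g s (Fin.last m)) t ≠ 0)
    (hmom : ∀ f : Fin (m + 1) → (Fin (m + 1) → ℂ) → ℂ, (∀ a, Differentiable ℂ (f a)) →
      ∫ t in (0:ℝ)..(2 * π),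
        ∑ a : Fin (m + 1), f a (g t) * deriv (fun s => g s a) t = 0) :
    ∃ G : ℂ → Fin (m + 1) → ℂ,
      ContinuousOn G (closure D) ∧ DifferentiableOn ℂ G D ∧
      G '' frontier D = g '' Set.Ico 0 (2 * π) := by
  have hγ : IsRegularLoop (2 * π) fun t => g t (Fin.last m) :=
    ⟨two_pi_pos, (contDiff_pi.1 hg _).of_le one_le_two, fun t => congr_fun (hgper t) _, hlastinj,
      hlastreg⟩
  obtain ⟨G, hGc, hGd, hG⟩ := boundaries_of_holomorphic_disks_general (Fin.last m) hD hDb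
    hg.continuous hgper hγ hlast fun a n => by
      simpa only [mul_assoc] using integral_mul_deriv_eq_zero_of_forall_sum hmom
        (f := fun z => z (Fin.last m) ^ n * z a) (by fun_prop) (Fin.last m)
  refine ⟨G, hGc, hGd, ?_⟩
  rw [← hlast, Set.image_image]
  exact Set.image_congr fun t _ => hG t
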